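/- Let ε ∈ (0,1) and δ ∈ (0, log(1 + 2ε/(1−ε))), and let k be an even positive integer with k ≥ 3·((1/δ)·log(1 + 2ε/(1−ε)))². Let f : ℝ → ℝ be any measurable function satisfying (1−ε)·φ(x−δ) ≤ f(x) ≤ φ(x−δ) for all x ∈ ℝ, and let P' denote the probability distribution on ℝ with density f(x)/∫_ℝ f. Then there exists an integer t with 1 ≤ t ≤ k such that |E_{x∼P'}[h_t(x)]| > ε/(k+1)^{k/2}. -/

import Mathlib

open MeasureTheory

/-- The probability density function of the standard Gaussian `N(0,1)`. -/
noncomputable def gaussPDF (x : ℝ) : ℝ := Real.exp (-x ^ 2 / 2) / Real.sqrt (2 * Real.pi)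

/-- The normalized probabilist's Hermite polynomial `h_t(x) = He_t(x)/√(t!)`. -/
noncomputable def hermiteNorm (t : ℕ) (x : ℝ) : ℝ :=
  (Polynomial.aeval x (Polynomial.hermite t)) / Real.sqrt (Nat.factorial t)

open Polynomial in
lemma herm_deriv (n : ℕ) : derivative (hermite (n+1)) = ((n+1 : ℕ) : ℤ[X]) * hermite n := by
  induction n with
  | zero => simp
  | succ n ih =>
    rw [hermite_succ (n+1), derivative_sub, derivative_mul, derivative_X, ih, derivative_mul,
      derivative_natCast]
    have := hermite_succ n
    rw [this]
    push_cast
    ring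

/-- the real valued Hermite polynomial -/
noncomputable def HH (t : ℕ) (x : ℝ) : ℝ := Polynomial.aeval x (Polynomial.hermite t)

lemma HH_rec (t : ℕ) (x : ℝ) : x * HH (t+1) x = HH (t+2) x + ((t:ℝ)+1) * HH t x := by
  unfold HH
  rw [Polynomial.hermite_succ (t+1), herm_deriv]
  simp

lemma HH_zero (x : ℝ) : HH 0 x = 1 := by simp [HH]
lemma HH_one (x : ℝ) : HH 1 x = x := by simp [HH]

/-- double factorial of `2r-1` -/
noncomputable def od (r : ℕ) : ℝ := ∏ i ∈ Finset.range r, (2 * (i:ℝ) + 1)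
lemma od_succ (r : ℕ) : od (r+1) = od r * (2 * (r:ℝ) + 1) := Finset.prod_range_succ _ _
lemma od_pos (r : ℕ) : 0 < od r := Finset.prod_pos (fun i _ => by positivity)

lemma pow_expand (x : ℝ) (j : ℕ) :
    x ^ (2*j) = ∑ r ∈ Finset.range (j+1), (j.choose r : ℝ) * od j / od r * HH (2*r) x ∧
    x ^ (2*j+1) = ∑ r ∈ Finset.range (j+1),
      (j.choose r : ℝ) * od (j+1) / od (r+1) * HH (2*r+1) x := by
  have step : ∀ j : ℕ, x ^ (2*j) = ∑ r ∈ Finset.range (j+1), (j.choose r : ℝ) * od j / od r * HH (2*r) x →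
     x ^ (2*j+1) = ∑ r ∈ Finset.range (j+1),
      (j.choose r : ℝ) * od (j+1) / od (r+1) * HH (2*r+1) x := by
    intro j h
    rw [pow_succ, h, Finset.sum_mul]
    have h1 : ∀ r ∈ Finset.range (j+1), (j.choose r : ℝ) * od j / od r * HH (2*r) x * x
        = (j.choose r : ℝ) * od j / od r * HH (2*r+1) x
          + (j.choose r : ℝ) * od j / od r * ((2*r : ℝ) * HH (2*r-1) x) := by
      intro r _
      cases r with
      | zero => simp [HH_zero, HH_one]
      | succ r =>
        have := HH_rec (2*r+1) x
        rw [show 2*(r+1) = 2*r+1+1 by ring, show 2*r+1+1-1 = 2*r+1 by omega]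
        rw [mul_assoc, mul_comm _ x, this]
        push_cast; ring
    rw [Finset.sum_congr rfl h1, Finset.sum_add_distrib, Finset.sum_range_succ' (fun r => (j.choose r : ℝ) * od j / od r * ((2*r : ℝ) * HH (2*r-1) x))]
    have h2 : ∑ r ∈ Finset.range j, (j.choose (r+1) : ℝ) * od j / od (r+1) * ((2*((r+1 : ℕ):ℝ)) * HH (2*(r+1)-1) x) = ∑ r ∈ Finset.range (j+1), (j.choose (r+1) : ℝ) * od j / od (r+1) * ((2*((r+1 : ℕ):ℝ)) * HH (2*(r+1)-1) x) := by
      rw [Finset.sum_range_succ _ j]; simp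
    rw [h2]
    simp only [Nat.cast_zero, mul_zero, zero_mul, add_zero]
    rw [← Finset.sum_add_distrib]
    apply Finset.sum_congr rfl
    intro r hr
    have hr' : r ≤ j := by simpa [Nat.lt_succ_iff] using hr
    have hc : ((j.choose (r+1) : ℝ)) * (r+1) = j.choose r * (j - r) := by
      have := Nat.choose_succ_right_eq j r
      have h3 : ((j.choose (r+1) * (r+1) : ℕ) : ℝ) = ((j.choose r * (j - r) : ℕ) : ℝ) := by rw [this]
      push_cast [Nat.cast_sub hr'] at h3
      exact h3
    rw [show 2*(r+1)-1 = 2*r+1 by omega, od_succ, od_succ]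
    have := (od_pos r).ne'
    have h4 : (2*(r:ℝ)+1) ≠ 0 := by positivity
    field_simp
    push_cast
    linear_combination (2 * od j * HH (2*r+1) x) * hc
  induction j with
  | zero =>
    refine ⟨by simp [HH_zero, od], step 0 (by simp [HH_zero, od])⟩
  | succ j ih =>
    have key : x ^ (2*(j+1)) = ∑ r ∈ Finset.range (j+1+1), ((j+1).choose r : ℝ) * od (j+1) / od r * HH (2*r) x := by
      rw [show 2*(j+1) = 2*j+1+1 by ring, pow_succ, ih.2, Finset.sum_mul]
      have h1 : ∀ r ∈ Finset.range (j+1), (j.choose r : ℝ) * od (j+1) / od (r+1) * HH (2*r+1) x * x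
        = (j.choose r : ℝ) * od (j+1) / od (r+1) * HH (2*(r+1)) x
          + (j.choose r : ℝ) * od (j+1) / od r * HH (2*r) x := by
        intro r _
        have := HH_rec (2*r) x
        rw [mul_assoc, mul_comm _ x, this, od_succ r]
        have := (od_pos r).ne'
        have h4 : (2*(r:ℝ)+1) ≠ 0 := by positivity
        rw [show 2*(r+1) = 2*r+2 by ring]
        field_simp
        push_cast; ring
      rw [Finset.sum_congr rfl h1, Finset.sum_add_distrib, Finset.sum_range_succ' _ (j+1)]
      have h2 : ∑ r ∈ Finset.range (j+1), (j.choose r : ℝ) * od (j+1) / od r * HH (2*r) x = ∑ r ∈ Finset.range (j+1+1), (j.choose r : ℝ) * od (j+1) / od r * HH (2*r) x := by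
        rw [Finset.sum_range_succ _ (j+1)]; simp
      rw [h2, Finset.sum_range_succ' _ (j+1), ← add_assoc, ← Finset.sum_add_distrib]
      congr 1
      · apply Finset.sum_congr rfl
        intro r _
        rw [Nat.choose_succ_succ]
        push_cast; ring
      · simp
    exact ⟨key, step _ key⟩

lemma fact_le_od (r : ℕ) : Real.sqrt ((2*r+1).factorial) ≤ od (r+1) := by
  rw [Real.sqrt_le_left (od_pos _).le]
  induction r with
  | zero => simp [od]
  | succ r ih =>
    rw [od_succ (r+1), show 2*(r+1)+1 = (2*r+1)+1+1 by ring, Nat.factorial_succ, Nat.factorial_succ]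
    push_cast
    have : (0:ℝ) ≤ r := by positivity
    have h1 : (2*(r:ℝ)+3) * ((2*(r:ℝ)+2)) ≤ (2*((r:ℝ)+1)+1)^2 := by nlinarith
    have h2 := mul_le_mul_of_nonneg_left ih (show 0 ≤ (2*(r:ℝ)+3) * ((2*(r:ℝ)+2)) by positivity)
    have h3 := mul_le_mul_of_nonneg_right h1 (sq_nonneg (od (r+1)))
    calc _ = (2*(r:ℝ)+3) * ((2*(r:ℝ)+2)) * ((2*r+1).factorial : ℝ) := by ring
      _ ≤ _ := h2.trans h3
      _ = _ := by ring

lemma num_ineq (i : ℕ) (hi : 1 ≤ i) :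
    od (i+1) * 2^i * (2.12:ℝ)^(i+1) * 2.51 < 1.5 * (2^i * i.factorial) * (2*(i:ℝ)+3)^(i+1) := by
  induction i, hi using Nat.le_induction with
  | base => simp [od, Finset.prod_range_succ]; norm_num
  | succ i hi ih =>
    have hi' : (1:ℝ) ≤ i := by exact_mod_cast hi
    rw [od_succ, Nat.factorial_succ]
    push_cast
    have h1 : (2*(i:ℝ)+3)^(i+1) ≤ (2*((i:ℝ)+1)+3)^(i+1) := by gcongr; linarith
    calc _ = (od (i+1) * 2^i * (2.12:ℝ)^(i+1) * 2.51) * ((2*((i:ℝ)+1)+1) * 2 * 2.12) := by ring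
      _ < (1.5 * (2^i * i.factorial) * (2*(i:ℝ)+3)^(i+1)) * ((2*((i:ℝ)+1)+1) * 2 * 2.12) := by
          gcongr
      _ ≤ (1.5 * (2^i * i.factorial) * (2*((i:ℝ)+1)+3)^(i+1)) * (2 * (i+1) * (2*((i:ℝ)+1)+3)) := by
          gcongr ?_ * ?_
          · gcongr
          · nlinarith
      _ = _ := by ring

lemma gp_pos (x : ℝ) : 0 < gaussPDF x := by unfold gaussPDF; positivity

lemma gp_cont : Continuous gaussPDF := by unfold gaussPDF; fun_prop

lemma gp_shift (x a b : ℝ) :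
    gaussPDF (x - a) = Real.exp ((a-b)*(x-b) - (a-b)^2/2) * gaussPDF (x - b) := by
  unfold gaussPDF
  rw [← mul_div_assoc, ← Real.exp_add]
  congr 2; ring

lemma int_pow_gp (n : ℕ) : Integrable (fun x : ℝ => x^n * gaussPDF x) := by
  have h := integrable_rpow_mul_exp_neg_mul_sq (b := 1/2) (by norm_num) (s := (n:ℝ)) (by linarith [(Nat.cast_nonneg n : (0:ℝ) ≤ n)])
  have h2 := h.div_const (Real.sqrt (2*Real.pi))
  refine h2.congr (Filter.Eventually.of_forall fun x => ?_)
  simp only [gaussPDF, Real.rpow_natCast]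
  rw [mul_div_assoc]
  congr 3; ring

open Polynomial in
lemma int_poly_gp (P : ℝ[X]) : Integrable (fun x : ℝ => P.eval x * gaussPDF x) := by
  induction P using Polynomial.induction_on' with
  | add p q hp hq =>
    simp only [eval_add, add_mul]
    exact hp.add hq
  | monomial n a =>
    simp only [eval_monomial, mul_assoc]
    exact (int_pow_gp n).const_mul a

open Polynomial in
lemma int_poly_gp_shift (P : ℝ[X]) (a : ℝ) : Integrable (fun x : ℝ => P.eval x * gaussPDF (x - a)) := by
  have h := (int_poly_gp (P.comp (X + C a))).comp_sub_right a
  simpa using h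

open Polynomial in
lemma int_poly_f (P : ℝ[X]) (a : ℝ) (f : ℝ → ℝ) (hf : Measurable f)
    (h : ∀ x, 0 ≤ f x ∧ f x ≤ gaussPDF (x - a)) : Integrable (fun x : ℝ => P.eval x * f x) := by
  refine (int_poly_gp_shift P a).mono ?_ ?_
  · exact (P.continuous.measurable.mul hf).aestronglyMeasurable
  · refine Filter.Eventually.of_forall fun x => ?_
    rw [norm_mul, norm_mul]
    gcongr
    rw [Real.norm_of_nonneg (h x).1, Real.norm_of_nonneg (gp_pos _).le]
    exact (h x).2

lemma int_HH_f (t : ℕ) (a : ℝ) (f : ℝ → ℝ) (hf : Measurable f)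
    (h : ∀ x, 0 ≤ f x ∧ f x ≤ gaussPDF (x - a)) : Integrable (fun x : ℝ => HH t x * f x) := by
  have := int_poly_f ((Polynomial.hermite t).map (Int.castRingHom ℝ)) a f hf h
  simpa [HH, Polynomial.aeval_def, Polynomial.eval_map] using this

lemma integral_gp : ∫ x : ℝ, gaussPDF x = 1 := by
  unfold gaussPDF
  rw [integral_div]
  have := integral_gaussian (1/2)
  have h2 : ∀ x : ℝ, -x^2/2 = -(1/2)*x^2 := fun x => by ring
  simp only [h2]
  rw [this, show Real.pi / (1/2) = 2 * Real.pi by ring]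
  exact div_self (by positivity)

lemma integral_odd_gp (i : ℕ) : ∫ x : ℝ, x^(2*i+1) * gaussPDF x = 0 := by
  have h := integral_neg_eq_self (fun x : ℝ => x^(2*i+1) * gaussPDF x) volume
  have h2 : ∀ x : ℝ, (-x)^(2*i+1) * gaussPDF (-x) = - (x^(2*i+1) * gaussPDF x) := by
    intro x
    rw [Odd.neg_pow ⟨i, rfl⟩]; simp [gaussPDF]
  simp only [h2, integral_neg] at h
  linarith

/-- half moments -/
noncomputable def MM (n : ℕ) : ℝ := ∫ x in Set.Ioi (0:ℝ), x^n * gaussPDF x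

lemma MM_formula (n : ℕ) : MM n = (1/2:ℝ) ^ (-((n:ℝ)+1)/2) * (1/2) * Real.Gamma (((n:ℝ)+1)/2) / Real.sqrt (2*Real.pi) := by
  have h := integral_rpow_mul_exp_neg_mul_rpow (p := 2) (q := n) (b := 1/2) (by norm_num) (by linarith [(Nat.cast_nonneg n : (0:ℝ) ≤ n)]) (by norm_num)
  rw [← h, ← integral_div]
  unfold MM
  congr 1
  ext x
  simp only [gaussPDF, Real.rpow_natCast]
  rw [← mul_div_assoc]
  congr 3
  rw [Real.rpow_two]; ring

lemma MM_succ (n : ℕ) : MM (n+2) = (n+1) * MM n := by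
  rw [MM_formula, MM_formula]
  push_cast
  rw [show ((n:ℝ)+2+1)/2 = ((n:ℝ)+1)/2 + 1 by ring, Real.Gamma_add_one (by positivity),
    show -((n:ℝ)+2+1)/2 = -((n:ℝ)+1)/2 - 1 by ring, Real.rpow_sub_one (by norm_num)]
  ring

lemma MM_nonneg (n : ℕ) : 0 ≤ MM n :=
  setIntegral_nonneg measurableSet_Ioi fun x hx => mul_nonneg (pow_nonneg (le_of_lt hx) _) (gp_pos x).le

lemma MM_one : MM 1 = 1 / Real.sqrt (2*Real.pi) := by
  rw [MM_formula]
  norm_num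

lemma MM_odd (i : ℕ) : MM (2*i+1) = 2^i * i.factorial / Real.sqrt (2*Real.pi) := by
  induction i with
  | zero => simp [MM_one]
  | succ i ih =>
    rw [show 2*(i+1)+1 = 2*i+1+2 by ring, MM_succ, ih, Nat.factorial_succ]
    push_cast; ring

lemma MM_cmp (n : ℕ) (c : ℝ) (hc : c^2 ≤ (n:ℝ)+1) : c * MM (n+1) ≤ MM (n+2) := by
  have h : 0 ≤ ∫ x in Set.Ioi (0:ℝ), ((x^(n+2) * gaussPDF x - (2*c) * (x^(n+1) * gaussPDF x)) + c^2 * (x^n * gaussPDF x)) := by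
    refine setIntegral_nonneg measurableSet_Ioi fun x hx => ?_
    have : 0 ≤ (x-c)^2 * (x^n * gaussPDF x) := mul_nonneg (sq_nonneg _) (mul_nonneg (pow_nonneg (le_of_lt hx) _) (gp_pos x).le)
    calc _ ≤ _ := this
      _ = _ := by ring
  have i1 := fun m => (int_pow_gp m).integrableOn (s := Set.Ioi (0:ℝ))
  rw [integral_add, integral_sub, integral_const_mul, integral_const_mul] at h
  · change 0 ≤ MM (n+2) - 2*c*MM (n+1) + c^2 * MM n at h
    have h1 := MM_succ n
    have h2 := mul_le_mul_of_nonneg_right hc (MM_nonneg n)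
    linarith
  · exact i1 _
  · exact (i1 _).const_mul _
  · exact (i1 _).sub ((i1 _).const_mul _)
  · exact (i1 _).const_mul _

/-- Case A integral lower bound. -/
lemma lower_A (ε δ c : ℝ) (i : ℕ) (hε : ε < 1) (hδ : 0 < δ) (hc : c^2 ≤ 2*(i:ℝ)+1)
    (f : ℝ → ℝ) (hf : Measurable f) (hε0 : 0 < ε)
    (hsand : ∀ x : ℝ, (1 - ε) * gaussPDF (x - δ) ≤ f x ∧ f x ≤ gaussPDF (x - δ)) :
    Real.exp (-δ^2/2) * (((1-ε) * Real.exp (δ*c) - 1) * MM (2*i+1)) ≤ ∫ x, x^(2*i+1) * f x := by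
  have hfint : Integrable (fun x : ℝ => x^(2*i+1) * f x) := by
    have := int_poly_f (Polynomial.X^(2*i+1)) δ f hf
      (fun x => ⟨le_trans (mul_nonneg (by linarith) (gp_pos _).le) (hsand x).1, (hsand x).2⟩)
    simpa using this
  set K := (1-ε) * Real.exp (δ*c) with hK
  have hKpos : 0 < K := mul_pos (by linarith) (Real.exp_pos _)
  set g : ℝ → ℝ := fun x => (K * (1 - δ*c) - 1) * (x^(2*i+1) * gaussPDF x) + (K*δ) * (x^(2*i+2) * gaussPDF x) with hg
  have gint : Integrable g := ((int_pow_gp _).const_mul _).add ((int_pow_gp _).const_mul _)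
  have hle : ∀ x, Real.exp (-δ^2/2) * (x^(2*i+1) * gaussPDF x + (Set.Ioi (0:ℝ)).indicator g x) ≤ x^(2*i+1) * f x := by
    intro x
    have hs := gp_shift x δ 0
    simp only [sub_zero] at hs
    rw [show δ*x - δ^2/2 = δ*x + -δ^2/2 by ring, Real.exp_add] at hs
    have hE := Real.exp_pos (-δ^2/2)
    have hG := gp_pos x
    by_cases hx : 0 < x
    · rw [Set.indicator_of_mem (show x ∈ Set.Ioi (0:ℝ) from hx)]
      have hp : 0 < x^(2*i+1) := by positivity
      have h1 : Real.exp (δ*c) * (1 + δ*(x-c)) ≤ Real.exp (δ*x) := by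
        have := Real.add_one_le_exp (δ*(x-c))
        have h3 : Real.exp (δ*x) = Real.exp (δ*c) * Real.exp (δ*(x-c)) := by
          rw [← Real.exp_add]; congr 1; ring
        rw [h3]
        gcongr; linarith
      calc _ = x^(2*i+1) * (((1-ε) * (Real.exp (δ*c) * (1 + δ*(x-c)))) * Real.exp (-δ^2/2) * gaussPDF x) := by
            simp only [hg, hK]; ring
        _ ≤ x^(2*i+1) * (((1-ε) * Real.exp (δ*x)) * Real.exp (-δ^2/2) * gaussPDF x) := by
            have : 0 ≤ 1 - ε := by linarith
            gcongr
        _ = x^(2*i+1) * ((1-ε) * gaussPDF (x-δ)) := by rw [hs]; ring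
        _ ≤ _ := by gcongr; exact (hsand x).1
    · rw [Set.indicator_of_notMem (show x ∉ Set.Ioi (0:ℝ) from hx), add_zero]
      push Not at hx
      have hp : x^(2*i+1) ≤ 0 := Odd.pow_nonpos ⟨i, rfl⟩ hx
      have h1 : Real.exp (δ*x) ≤ 1 := by
        rw [Real.exp_le_one_iff]; exact mul_nonpos_of_nonneg_of_nonpos hδ.le hx
      have h2 : f x ≤ Real.exp (-δ^2/2) * gaussPDF x := by
        refine (hsand x).2.trans ?_
        rw [hs]
        gcongr
        nlinarith
      calc _ = x^(2*i+1) * (Real.exp (-δ^2/2) * gaussPDF x) := by ring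
        _ ≤ _ := mul_le_mul_of_nonpos_left h2 hp
  have h := integral_mono (((int_pow_gp (2*i+1)).add (gint.indicator measurableSet_Ioi)).const_mul (Real.exp (-δ^2/2))) hfint hle
  refine le_trans ?_ h
  rw [integral_const_mul]
  refine mul_le_mul_of_nonneg_left ?_ (Real.exp_pos _).le
  simp only [Pi.add_apply]
  rw [integral_add (int_pow_gp _) (gint.indicator measurableSet_Ioi), integral_odd_gp, integral_indicator measurableSet_Ioi, hg,
    integral_add ((int_pow_gp _).const_mul _).integrableOn ((int_pow_gp _).const_mul _).integrableOn,
    integral_const_mul, integral_const_mul]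
  change _ ≤ 0 + ((K * (1 - δ*c) - 1) * MM (2*i+1) + (K*δ) * MM (2*i+2))
  have := MM_cmp (2*i) c (by push_cast; exact hc)
  have h2 := mul_le_mul_of_nonneg_left this (show 0 ≤ K*δ by positivity)
  linarith

/-- Case B -/
lemma lower_B (ε δ τ : ℝ) (hε : ε < 1) (hτ : τ < δ)
    (f : ℝ → ℝ) (hf : Measurable f) (hε0 : 0 < ε)
    (hsand : ∀ x : ℝ, (1 - ε) * gaussPDF (x - δ) ≤ f x ∧ f x ≤ gaussPDF (x - δ)) :
    (1-ε) * (δ-τ) - ε * Real.exp (-(δ-τ)^2/2) * MM 1 ≤ ∫ x, (x-τ) * f x := by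
  have hfint : Integrable (fun x : ℝ => (x-τ) * f x) := by
    have := int_poly_f (Polynomial.X - Polynomial.C τ) δ f hf
      (fun x => ⟨le_trans (mul_nonneg (by linarith) (gp_pos _).le) (hsand x).1, (hsand x).2⟩)
    simpa using this
  have i1 : Integrable (fun x : ℝ => x * gaussPDF x) := by simpa using int_pow_gp 1
  have o1 : ∫ x : ℝ, x * gaussPDF x = 0 := by simpa using integral_odd_gp 0
  have i0 : Integrable (fun x : ℝ => gaussPDF x) := by simpa using int_pow_gp 0
  set E := Real.exp (-(δ-τ)^2/2) with hE
  set g : ℝ → ℝ := fun y => y * gaussPDF y - (Set.Ioi (0:ℝ)).indicator (fun y => y * gaussPDF y) y with hg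
  have gint : Integrable g := i1.sub (i1.indicator measurableSet_Ioi)
  have gval : ∫ y, g y = - MM 1 := by
    rw [hg, integral_sub i1 (i1.indicator measurableSet_Ioi), o1, integral_indicator measurableSet_Ioi]
    simp [MM]
  set q : ℝ → ℝ := fun y => y * gaussPDF y + (δ-τ) * gaussPDF y with hq
  have qint : Integrable q := i1.add (i0.const_mul _)
  have qval : ∫ y, q y = δ - τ := by
    rw [hq, integral_add i1 (i0.const_mul _), o1, integral_const_mul, integral_gp]; ring
  have hle : ∀ x, (1-ε) * q (x-δ) + (ε*E) * g (x-τ) ≤ (x-τ) * f x := by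
    intro x
    have hs := gp_shift x δ τ
    have hG := gp_pos (x-τ)
    have hGd := gp_pos (x-δ)
    have hqx : q (x-δ) = (x-τ) * gaussPDF (x-δ) := by simp only [hq]; ring
    rw [hqx]
    by_cases hx : 0 < x - τ
    · have : g (x-τ) = 0 := by simp only [hg]; rw [Set.indicator_of_mem (show x-τ ∈ Set.Ioi (0:ℝ) from hx)]; ring
      rw [this]
      have := mul_le_mul_of_nonneg_left (hsand x).1 hx.le
      linarith
    · have : g (x-τ) = (x-τ) * gaussPDF (x-τ) := by simp only [hg]; rw [Set.indicator_of_notMem (show x-τ ∉ Set.Ioi (0:ℝ) from hx)]; ring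
      rw [this]
      push Not at hx
      have h1 : gaussPDF (x-δ) ≤ E * gaussPDF (x-τ) := by
        rw [hs]
        gcongr
        rw [hE]
        gcongr
        nlinarith
      have h2 := mul_le_mul_of_nonpos_left (hsand x).2 hx
      have h3 := mul_le_mul_of_nonneg_left (mul_le_mul_of_nonpos_left h1 hx) hε0.le
      linarith
  have h := integral_mono (((qint.comp_sub_right δ).const_mul (1-ε)).add ((gint.comp_sub_right τ).const_mul (ε*E))) hfint hle
  refine le_trans (le_of_eq ?_) h
  simp only [Pi.add_apply]
  rw [integral_add ((qint.comp_sub_right δ).const_mul (1-ε)) ((gint.comp_sub_right τ).const_mul (ε*E)), integral_const_mul, integral_const_mul,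
    integral_sub_right_eq_self q, integral_sub_right_eq_self g, gval, qval]
  ring

lemma upper_A (i : ℕ) (η δ : ℝ) (f : ℝ → ℝ) (hf : Measurable f)
    (h : ∀ x, 0 ≤ f x ∧ f x ≤ gaussPDF (x - δ))
    (hH : ∀ r ≤ i, |∫ x, HH (2*r+1) x * f x| ≤ η * Real.sqrt ((2*r+1).factorial)) (hη : 0 ≤ η) :
    ∫ x, x^(2*i+1) * f x ≤ η * (od (i+1) * 2^i) := by
  have h1 : ∀ x, x^(2*i+1) * f x = ∑ r ∈ Finset.range (i+1),
      (i.choose r : ℝ) * od (i+1) / od (r+1) * (HH (2*r+1) x * f x) := by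
    intro x
    rw [(pow_expand x i).2, Finset.sum_mul]
    exact Finset.sum_congr rfl fun r _ => by ring
  simp only [h1]
  rw [integral_finsetSum _ (fun r _ => (int_HH_f (2*r+1) δ f hf h).const_mul _)]
  simp only [integral_const_mul]
  calc _ ≤ ∑ r ∈ Finset.range (i+1), (i.choose r : ℝ) * (η * od (i+1)) := by
        apply Finset.sum_le_sum
        intro r hr
        have hr' : r ≤ i := by simpa [Nat.lt_succ_iff] using hr
        have hp := od_pos (r+1)
        have hp2 := od_pos (i+1)
        calc _ ≤ (i.choose r : ℝ) * od (i+1) / od (r+1) * (η * od (r+1)) := by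
              have h3 := (le_abs_self _).trans ((hH r hr').trans (mul_le_mul_of_nonneg_left (fact_le_od r) hη))
              gcongr
          _ = _ := by field_simp
    _ = _ := by
        rw [← Finset.sum_mul]
        have : ∑ r ∈ Finset.range (i+1), (i.choose r : ℝ) = 2^i := by exact_mod_cast Nat.sum_range_choose i
        rw [this]; ring

set_option maxHeartbeats 2000000 in
/-- For `ε ∈ (0,1)`, `δ ∈ (0, log(1 + 2ε/(1−ε)))`, and an even positive integer
`k ≥ 3·((1/δ)·log(1 + 2ε/(1−ε)))²`: for any `ε`-corruption `f` of the density of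
`N(δ,1)`, the visible-sample distribution `P'` has some normalized Hermite moment of
order `t ∈ [1,k]` with `|E_{x∼P'}[h_t(x)]| > ε/(k+1)^{k/2}`. -/
theorem stmt6 (ε δ : ℝ) (k : ℕ)
    (hε : ε ∈ Set.Ioo (0 : ℝ) 1)
    (hδ : δ ∈ Set.Ioo 0 (Real.log (1 + 2 * ε / (1 - ε))))
    (hkeven : Even k) (hkpos : 0 < k)
    (hk : 3 * ((1 / δ) * Real.log (1 + 2 * ε / (1 - ε))) ^ 2 ≤ (k : ℝ))
    (f : ℝ → ℝ) (hf : Measurable f)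
    (hsand : ∀ x : ℝ, (1 - ε) * gaussPDF (x - δ) ≤ f x ∧ f x ≤ gaussPDF (x - δ)) :
    ∃ t : ℕ, 1 ≤ t ∧ t ≤ k ∧
      |(∫ x : ℝ, hermiteNorm t x * f x) / (∫ x : ℝ, f x)| >
        ε / (((k : ℝ) + 1) ^ ((k : ℝ) / 2)) := by
  classical
  obtain ⟨hε0, hε1⟩ := hε
  obtain ⟨hδ0, hδL⟩ := hδ
  set L := Real.log (1 + 2 * ε / (1 - ε)) with hL
  have h1ε : 0 < 1 - ε := by linarith
  have hexpL : Real.exp L = (1+ε)/(1-ε) := by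
    rw [hL, Real.exp_log (by positivity)]; field_simp; ring
  set R := (1/δ) * L with hR
  have hLR : L = δ * R := by rw [hR]; field_simp
  have hR1 : 1 < R := by
    have : δ * 1 < δ * R := by rw [← hLR]; linarith
    exact lt_of_mul_lt_mul_left this hδ0.le
  have hk3 : (3:ℝ) < k := by nlinarith
  have hk3' : 3 < k := by exact_mod_cast hk3
  obtain ⟨i, rfl, hi⟩ : ∃ i, k = 2*i+2 ∧ 1 ≤ i := by
    obtain ⟨j, hj⟩ := hkeven
    exact ⟨j-1, by omega, by omega⟩
  have hD : (((2*i+2 : ℕ) : ℝ) + 1) ^ (((2*i+2 : ℕ) : ℝ)/2) = (2*(i:ℝ)+3)^(i+1) := by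
    rw [show (((2*i+2 : ℕ) : ℝ)/2) = ((i+1 : ℕ) : ℝ) by push_cast; ring, Real.rpow_natCast]
    congr 1; push_cast; ring
  rw [hD]
  set D : ℝ := (2*(i:ℝ)+3)^(i+1) with hDdef
  have hi' : (1:ℝ) ≤ i := by exact_mod_cast hi
  have hD25 : 25 ≤ D := by
    calc (25:ℝ) = 5^2 := by norm_num
      _ ≤ (2*(i:ℝ)+3)^2 := by gcongr; linarith
      _ ≤ D := pow_le_pow_right₀ (by linarith) (by omega)
  have hDpos : 0 < D := by linarith
  have hf2 : ∀ x, 0 ≤ f x ∧ f x ≤ gaussPDF (x - δ) := fun x =>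
    ⟨le_trans (mul_nonneg h1ε.le (gp_pos _).le) (hsand x).1, (hsand x).2⟩
  have i0 : Integrable (fun x : ℝ => gaussPDF x) := by simpa using int_pow_gp 0
  have i0f : Integrable f := by simpa using int_poly_f 1 δ f hf hf2
  have hig : ∫ x, gaussPDF (x - δ) = 1 := by
    rw [integral_sub_right_eq_self gaussPDF]; exact integral_gp
  have hm1 : ∫ x, f x ≤ 1 := by
    rw [← hig]
    exact integral_mono i0f (i0.comp_sub_right δ) (fun x => (hsand x).2)
  have hm0 : 0 < ∫ x, f x := by
    have := integral_mono ((i0.comp_sub_right δ).const_mul (1-ε)) i0f (fun x => (hsand x).1)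
    rw [integral_const_mul, hig] at this
    linarith
  set m := ∫ x, f x with hm
  by_cases hcase : δ < 2*R + 0.08
  · by_contra hcon
    push Not at hcon
    have hη : 0 ≤ ε / D := by positivity
    have hup := upper_A i (ε/D) δ f hf hf2 (by
      intro r hr
      have h := hcon (2*r+1) (by omega) (by omega)
      have hs : 0 < Real.sqrt ((2*r+1).factorial) := Real.sqrt_pos.mpr (by exact_mod_cast Nat.factorial_pos _)
      have h2 : ∫ x, hermiteNorm (2*r+1) x * f x = (∫ x, HH (2*r+1) x * f x) / Real.sqrt ((2*r+1).factorial) := by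
        rw [← integral_div]
        congr 1; ext x; simp only [hermiteNorm, HH]; ring
      rw [h2, abs_div, abs_div, abs_of_pos hs, abs_of_pos hm0, div_div, div_le_iff₀ (by positivity)] at h
      refine h.trans ?_
      gcongr
      exact mul_le_of_le_one_right hs.le hm1) hη
    have hlow := lower_A ε δ (1.5*R) i hε1 hδ0 (by push_cast at hk; nlinarith) f hf hε0 hsand
    set y := Real.exp (L/2) with hy
    have hy0 : 0 < y := Real.exp_pos _
    have hy2 : y^2 = (1+ε)/(1-ε) := by rw [← hexpL, hy, ← Real.exp_nat_mul]; congr 1; push_cast; ring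
    have hK : (1-ε) * Real.exp (δ*(1.5*R)) = (1+ε) * y := by
      rw [show δ*(1.5*R) = L + L/2 by rw [hLR]; ring, Real.exp_add, hexpL]
      field_simp
      rw [hy]
    have hy1 : 1 ≤ y * (1-ε/2) := by
      have : 1 ≤ (y * (1-ε/2))^2 := by
        rw [mul_pow, hy2, div_mul_eq_mul_div, le_div_iff₀ h1ε]
        nlinarith [mul_pos hε0 h1ε, mul_pos hε0 hε0, mul_pos (mul_pos hε0 hε0) hε0]
      have h0 : 0 ≤ y * (1-ε/2) := mul_nonneg hy0.le (by linarith)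
      nlinarith
    rw [hK] at hlow
    have hM := MM_odd i
    have hMp : 0 < MM (2*i+1) := by rw [hM]; positivity
    have hexp : (2.12:ℝ)⁻¹^(i+1) ≤ Real.exp (-δ^2/2) * y := by
      have e1 : Real.exp (0.7488:ℝ) ≤ 2.12 := by
        have := Real.exp_bound' (x := 0.7488) (by norm_num) (by norm_num) (n := 5) (by norm_num)
        refine this.trans ?_
        norm_num [Finset.sum_range_succ, Nat.factorial]
      have e2 : (2.12:ℝ)⁻¹ ≤ Real.exp (-0.7488) := by
        rw [Real.exp_neg]; gcongr
      calc _ ≤ (Real.exp (-0.7488))^(i+1) := by gcongr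
        _ = Real.exp (((i+1:ℕ):ℝ) * (-0.7488)) := by rw [Real.exp_nat_mul]
        _ ≤ Real.exp (-δ^2/2 + L/2) := by
            gcongr
            have hd : δ ≤ 2.08*R := by linarith
            have h3 : δ*(δ-R) ≤ 2.08*R*(1.08*R) := by
              rcases le_total δ R with h | h
              · have : δ*(δ-R) ≤ 0 := mul_nonpos_of_nonneg_of_nonpos hδ0.le (by linarith)
                nlinarith
              · exact mul_le_mul hd (by linarith) (by linarith) (by linarith)
            push_cast at hk ⊢
            rw [hLR]
            nlinarith
        _ = _ := by rw [Real.exp_add]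
    have hpi : Real.sqrt (2*Real.pi) < 2.51 := by
      rw [Real.sqrt_lt' (by norm_num)]
      have := Real.pi_lt_d2
      linarith
    have hspos : 0 < Real.sqrt (2*Real.pi) := by positivity
    have hnum := num_ineq i hi
    have hchain : (2.12:ℝ)⁻¹^(i+1) * (1.5*ε*MM (2*i+1)) ≤ ε/D * (od (i+1) * 2^i) := by
      refine le_trans ?_ (hlow.trans hup)
      calc _ ≤ (Real.exp (-δ^2/2) * y) * (1.5*ε*MM (2*i+1)) := by gcongr
        _ = Real.exp (-δ^2/2) * ((1.5*ε*y) * MM (2*i+1)) := by ring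
        _ ≤ _ := by gcongr; linarith
    have hod := od_pos (i+1)
    rw [hM, inv_pow, div_mul_eq_mul_div, le_div_iff₀ hDpos] at hchain
    have h5 : 1.5 * (2^i * i.factorial) * D ≤ od (i+1) * 2^i * (2.12:ℝ)^(i+1) * Real.sqrt (2*Real.pi) := by
      have h6 := mul_le_mul_of_nonneg_left hchain (show 0 ≤ (2.12:ℝ)^(i+1) * Real.sqrt (2*Real.pi) / ε by positivity)
      have e1 : (2.12:ℝ)^(i+1) ≠ 0 := by positivity
      calc _ = _ := ?_
        _ ≤ _ := h6
        _ = _ := ?_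
      · field_simp
      · field_simp
    have h7 : od (i+1) * 2^i * (2.12:ℝ)^(i+1) * Real.sqrt (2*Real.pi) ≤ od (i+1) * 2^i * (2.12:ℝ)^(i+1) * 2.51 := by
      gcongr
    linarith
  · push Not at hcase
    refine ⟨1, le_rfl, by omega, ?_⟩
    have hB := lower_B ε δ 0.04 hε1 (by linarith) f hf hε0 hsand
    have hxf : Integrable (fun x : ℝ => x * f x) := by simpa using int_poly_f Polynomial.X δ f hf hf2
    have hs1 : ∫ x, (x-0.04) * f x = (∫ x, x * f x) - 0.04 * m := by
      rw [hm, ← integral_const_mul, ← integral_sub hxf (i0f.const_mul _)]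
      congr 1; ext x; ring
    have hE : Real.exp (-(δ-0.04)^2/2) ≤ (1-ε)/(1+ε) := by
      have : Real.exp (-L) = (1-ε)/(1+ε) := by rw [Real.exp_neg, hexpL, inv_div]
      rw [← this]
      gcongr
      rw [hLR]
      nlinarith
    have hM1 : MM 1 ≤ 1 := by
      rw [MM_one]
      refine div_le_one_of_le₀ ?_ (by positivity)
      rw [Real.one_le_sqrt]
      linarith [Real.pi_gt_three]
    have hb : ε * Real.exp (-(δ-0.04)^2/2) * MM 1 ≤ 1 - ε := by
      calc _ ≤ 1 * ((1-ε)/(1+ε)) * 1 := by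
            have := MM_nonneg 1
            gcongr
        _ ≤ _ := by
            rw [one_mul, mul_one]
            exact div_le_self h1ε.le (by linarith)
    have hpos : 0.04 * m < ∫ x, x * f x := by
      have : (1-ε) * 1 < (1-ε) * (δ-0.04) := by gcongr; linarith
      linarith
    have hh : ∫ x, hermiteNorm 1 x * f x = ∫ x, x * f x := by
      congr 1; ext x; simp [hermiteNorm]
    rw [hh]
    have h8 : 0.04 < (∫ x, x * f x) / m := by rw [lt_div_iff₀ hm0]; exact hpos
    have h9 : ε / D ≤ 0.04 := by
      rw [div_le_iff₀ hDpos]; linarith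
    exact lt_of_le_of_lt h9 (lt_of_lt_of_le h8 (le_abs_self _))
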